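/- For every z > 0 and every n ≥ 1, the endpoint evaluations of consecutive monic orthogonal polynomials for the weight e^{−x⁴} on [−z, z] satisfy P_n(z)·P_{n−1}(z)·e^{−z⁴} = [ n/2 − 2γ_n·(γ_{n+1} + γ_n + γ_{n−1}) ]·h_{n−1}. -/

import Mathlib

/-!
Write `L p = ∫ p(x) e^{-V(x)} dx` over `[-z, z]`. Integrating the derivative of
`P_{n+1} P_n e^{-V}` gives `L ((P_{n+1} P_n)') - L (V' P_{n+1} P_n)`. By orthogonality the first
term is `(n + 1) h_n`, because `P_n` only sees the leading coefficient of `P_{n+1}'` and `P_{n+1}`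
is orthogonal to `P_n'`. The boundary contributions at `z` and `-z` are equal, since `P_n` has the
parity of `n` and `V` is even. For `V = x ^ 4` the remaining term `4 L (x ^ 3 P_{n+1} P_n)` is
evaluated by applying the three-term recurrence until only `h_{n+1} = γ_{n+1} h_n` and `h_n`
survive.
-/

open Polynomial

section MomentFunctional

variable {R : Type*} [CommRing R] {L : R[X] →ₗ[R] R} {P : ℕ → R[X]} {γ : ℕ → R}

/-- The three-term recurrence with vanishing diagonal coefficients, as satisfied by the monic
orthogonal polynomials of an even weight. -/
structure IsSymmetricRecurrence (P : ℕ → R[X]) (γ : ℕ → R) : Prop where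
  zero : P 0 = 1
  one : P 1 = X
  coeff_zero : γ 0 = 0
  X_mul_succ : ∀ n, X * P (n + 1) = P (n + 2) + C (γ (n + 1)) * P n

theorem IsSymmetricRecurrence.eval_neg (hrec : IsSymmetricRecurrence P γ) (x : R) (n : ℕ) :
    (P n).eval (-x) = (-1) ^ n * (P n).eval x := by
  induction n using Nat.twoStepInduction with
  | zero => simp [hrec.zero]
  | one => simp [hrec.one]
  | more n ih ih_succ =>
    have eval_add_two (y : R) :
        (P (n + 2)).eval y = y * (P (n + 1)).eval y - γ (n + 1) * (P n).eval y := by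
      simp [eq_sub_of_add_eq (hrec.X_mul_succ n).symm]
    rw [eval_add_two, eval_add_two, ih, ih_succ]
    ring

/-- `P` is the monic orthogonal polynomial sequence of the moment functional `L`. The squared norms
`L (P n ^ 2)` are not required to be nonzero. -/
structure IsMonicOrthogonal (L : R[X] →ₗ[R] R) (P : ℕ → R[X]) : Prop where
  monic : ∀ n, (P n).Monic
  natDegree_eq : ∀ n, (P n).natDegree = n
  orthogonal : ∀ m n, m ≠ n → L (P m * P n) = 0

namespace IsMonicOrthogonal

theorem coeff_self (hP : IsMonicOrthogonal L P) (n : ℕ) : (P n).coeff n = 1 := by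
  simpa [hP.natDegree_eq] using (hP.monic n).coeff_natDegree

theorem map_mul_of_degree_lt (hP : IsMonicOrthogonal L P) {n : ℕ} {q : R[X]}
    (hq : q.degree < n) : L (P n * q) = 0 := by
  nontriviality R
  let S : Sequence R :=
    ⟨P, fun i ↦ by rw [degree_eq_natDegree (hP.monic i).ne_zero, hP.natDegree_eq]⟩
  have span_eq : Submodule.span R (P '' Set.Iio n) = degreeLT R n :=
    S.span_degreeLT fun i _ ↦ (hP.monic i).leadingCoeff ▸ isUnit_one
  have span_le : Submodule.span R (P '' Set.Iio n) ≤ (L ∘ₗ LinearMap.mulLeft R (P n)).ker := by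
    rw [Submodule.span_le]
    rintro _ ⟨m, hm, rfl⟩
    exact hP.orthogonal n m (ne_of_gt hm)
  exact span_le (span_eq ▸ mem_degreeLT.2 hq)

theorem map_mul_of_natDegree_le (hP : IsMonicOrthogonal L P) {n : ℕ} {q : R[X]}
    (hq : q.natDegree ≤ n) : L (P n * q) = q.coeff n * L (P n ^ 2) := by
  have degree_lt : (q - C (q.coeff n) * P n).degree < n := by
    rw [degree_lt_iff_coeff_zero]
    intro i hi
    rcases hi.eq_or_lt with rfl | hlt
    · simp [hP.coeff_self]
    · simp [coeff_eq_zero_of_natDegree_lt (hq.trans_lt hlt),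
        coeff_eq_zero_of_natDegree_lt ((hP.natDegree_eq n).trans_lt hlt)]
  calc L (P n * q)
      = L (P n * (q - C (q.coeff n) * P n) + q.coeff n • P n ^ 2) := by
        rw [smul_eq_C_mul]; ring_nf
    _ = q.coeff n * L (P n ^ 2) := by
        rw [map_add, hP.map_mul_of_degree_lt degree_lt, map_smul, smul_eq_mul, zero_add]

theorem map_derivative_mul_succ (hP : IsMonicOrthogonal L P) (n : ℕ) :
    L (derivative (P (n + 1) * P n)) = (n + 1) * L (P n ^ 2) := by
  have natDegree_le : (derivative (P (n + 1))).natDegree ≤ n := by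
    simpa [hP.natDegree_eq] using natDegree_derivative_le (P (n + 1))
  have degree_lt : (derivative (P n)).degree < (n + 1 : ℕ) :=
    (degree_derivative_le.trans degree_le_natDegree).trans_lt
      (by rw [hP.natDegree_eq]; exact_mod_cast n.lt_succ_self)
  rw [derivative_mul, map_add, hP.map_mul_of_degree_lt degree_lt, mul_comm,
    hP.map_mul_of_natDegree_le natDegree_le, coeff_derivative, hP.coeff_self, one_mul, add_zero]

theorem map_succ_mul_X_mul (hP : IsMonicOrthogonal L P) (n : ℕ) :
    L (P (n + 1) * (X * P n)) = L (P (n + 1) ^ 2) := by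
  have natDegree_le : (X * P n).natDegree ≤ n + 1 :=
    natDegree_mul_le.trans (by grind [hP.natDegree_eq, natDegree_X_le])
  rw [hP.map_mul_of_natDegree_le natDegree_le, coeff_X_mul, hP.coeff_self, one_mul]

theorem map_mul_X_mul_of_succ_lt (hP : IsMonicOrthogonal L P) {m n : ℕ} (hmn : n + 1 < m) :
    L (P m * (X * P n)) = 0 := by
  refine hP.map_mul_of_degree_lt (degree_le_natDegree.trans_lt ?_)
  exact_mod_cast natDegree_mul_le.trans_lt (by grind [hP.natDegree_eq, natDegree_X_le])

theorem map_succ_sq (hP : IsMonicOrthogonal L P) (hrec : IsSymmetricRecurrence P γ) (n : ℕ) :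
    L (P (n + 1) ^ 2) = γ (n + 1) * L (P n ^ 2) := by
  calc L (P (n + 1) ^ 2)
      = L (P n * (X * P (n + 1))) := by rw [← hP.map_succ_mul_X_mul]; ring_nf
    _ = L (P n * P (n + 2) + γ (n + 1) • P n ^ 2) := by
        rw [hrec.X_mul_succ, smul_eq_C_mul]; ring_nf
    _ = γ (n + 1) * L (P n ^ 2) := by
        rw [map_add, hP.orthogonal _ _ (by lia), map_smul, smul_eq_mul, zero_add]

theorem map_X_mul_sq (hP : IsMonicOrthogonal L P) (hrec : IsSymmetricRecurrence P γ) (n : ℕ) :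
    L ((X * P n) ^ 2) = (γ (n + 1) + γ n) * L (P n ^ 2) := by
  rw [add_mul, ← hP.map_succ_sq hrec]
  cases n with
  | zero => simp [hrec.zero, hrec.one, hrec.coeff_zero]
  | succ n =>
    calc L ((X * P (n + 1)) ^ 2)
        = L (P (n + 2) * (X * P (n + 1)) + γ (n + 1) • (P (n + 1) * (X * P n))) := by
          nth_rw 1 [sq, hrec.X_mul_succ]
          rw [smul_eq_C_mul]
          ring_nf
      _ = L (P (n + 2) ^ 2) + γ (n + 1) * L (P (n + 1) ^ 2) := by
          rw [map_add, map_smul, hP.map_succ_mul_X_mul, hP.map_succ_mul_X_mul, smul_eq_mul]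

theorem map_X_pow_three_mul (hP : IsMonicOrthogonal L P) (hrec : IsSymmetricRecurrence P γ)
    (n : ℕ) : L (X ^ 3 * (P (n + 1) * P n)) =
      γ (n + 1) * (γ (n + 2) + γ (n + 1) + γ n) * L (P n ^ 2) := by
  have expansion : X ^ 3 * (P (n + 1) * P n) = P (n + 3) * (X * P n) +
      γ (n + 2) • (P (n + 1) * (X * P n)) + γ (n + 1) • (X * P n) ^ 2 := by
    simp only [smul_eq_C_mul]
    linear_combination X ^ 2 * P n * hrec.X_mul_succ n + X * P n * hrec.X_mul_succ (n + 1)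
  calc L (X ^ 3 * (P (n + 1) * P n))
      = γ (n + 2) * L (P (n + 1) ^ 2) + γ (n + 1) * L ((X * P n) ^ 2) := by
        rw [expansion, map_add, map_add, map_smul, map_smul,
          hP.map_mul_X_mul_of_succ_lt (by lia), hP.map_succ_mul_X_mul, smul_eq_mul, smul_eq_mul,
          zero_add]
    _ = γ (n + 1) * (γ (n + 2) + γ (n + 1) + γ n) * L (P n ^ 2) := by
        rw [hP.map_succ_sq hrec, hP.map_X_mul_sq hrec]
        ring

theorem map_derivative_X_pow_four_mul (hP : IsMonicOrthogonal L P)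
    (hrec : IsSymmetricRecurrence P γ) (n : ℕ) :
    L (derivative (X ^ 4) * (P (n + 1) * P n)) =
      4 * (γ (n + 1) * (γ (n + 2) + γ (n + 1) + γ n) * L (P n ^ 2)) := by
  have derivative_eq : derivative (X ^ 4 : R[X]) = (4 : R) • X ^ 3 := by
    rw [derivative_X_pow, smul_eq_C_mul]; norm_num
  rw [derivative_eq, smul_mul_assoc, map_smul, hP.map_X_pow_three_mul hrec, smul_eq_mul]

end IsMonicOrthogonal

end MomentFunctional

section ExpWeight

variable (V : ℝ[X]) (a b : ℝ)

theorem intervalIntegrable_eval_mul_exp_neg_eval (p : ℝ[X]) :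
    IntervalIntegrable (fun x ↦ p.eval x * Real.exp (-V.eval x)) MeasureTheory.volume a b :=
  (p.continuous.mul V.continuous.neg.rexp).intervalIntegrable a b

/-- The moment functional of the exponential weight `e^{-V}` on the interval from `a` to `b`. -/
noncomputable def expWeightFunctional : ℝ[X] →ₗ[ℝ] ℝ where
  toFun p := ∫ x in a..b, p.eval x * Real.exp (-V.eval x)
  map_add' p q := by
    simp only [eval_add, add_mul]
    exact intervalIntegral.integral_add (intervalIntegrable_eval_mul_exp_neg_eval V a b p)
      (intervalIntegrable_eval_mul_exp_neg_eval V a b q)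
  map_smul' c p := by
    simp [mul_assoc]

theorem expWeightFunctional_apply (p : ℝ[X]) :
    expWeightFunctional V a b p = ∫ x in a..b, p.eval x * Real.exp (-V.eval x) := rfl

theorem expWeightFunctional_derivative_sub (p : ℝ[X]) :
    expWeightFunctional V a b (derivative p - derivative V * p) =
      p.eval b * Real.exp (-V.eval b) - p.eval a * Real.exp (-V.eval a) := by
  refine intervalIntegral.integral_eq_sub_of_hasDerivAt
    (f := fun x ↦ p.eval x * Real.exp (-V.eval x)) (fun x _ ↦ ?_)
    (intervalIntegrable_eval_mul_exp_neg_eval V a b _)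
  refine ((p.hasDerivAt x).mul (V.hasDerivAt x).neg.exp).congr_deriv ?_
  simp only [eval_sub, eval_mul, Pi.neg_apply]
  ring

variable {V} {z : ℝ} {P : ℕ → ℝ[X]} {γ : ℕ → ℝ}

theorem two_mul_eval_succ_mul_eval_mul_exp (hV : V.eval (-z) = V.eval z)
    (hP : IsMonicOrthogonal (expWeightFunctional V (-z) z) P) (hrec : IsSymmetricRecurrence P γ)
    (n : ℕ) :
    2 * ((P (n + 1)).eval z * (P n).eval z * Real.exp (-V.eval z)) =
      (n + 1) * expWeightFunctional V (-z) z (P n ^ 2) -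
        expWeightFunctional V (-z) z (derivative V * (P (n + 1) * P n)) := by
  have product_odd : (P (n + 1) * P n).eval (-z) = -(P (n + 1) * P n).eval z := by
    have sign : (-1 : ℝ) ^ (n + 1) * (-1) ^ n = -1 := by
      rw [← pow_add]; exact Odd.neg_one_pow ⟨n, by ring⟩
    rw [eval_mul, eval_mul, hrec.eval_neg, hrec.eval_neg, mul_mul_mul_comm, sign, neg_one_mul]
  have boundary := expWeightFunctional_derivative_sub V (-z) z (P (n + 1) * P n)
  rw [map_sub, hP.map_derivative_mul_succ, product_odd, hV, eval_mul] at boundary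
  linear_combination -boundary

end ExpWeight

/-- Endpoint evaluation identity for consecutive monic orthogonal polynomials for
the weight `e^{-x⁴}` on `[-z, z]`:
`P_n(z)·P_{n-1}(z)·e^{-z⁴} = (n/2 - 2γ_n(γ_{n+1}+γ_n+γ_{n-1}))·h_{n-1}`. -/
theorem truncated_freud_endpoint_product (z : ℝ) (hz : 0 < z)
    (P : ℕ → Polynomial ℝ) (γ h : ℕ → ℝ)
    (hmonic : ∀ n, (P n).Monic)
    (hdeg : ∀ n, (P n).natDegree = n)
    (horth : ∀ m n, m ≠ n →
      ∫ x in (-z)..z, (P m).eval x * (P n).eval x * Real.exp (-x ^ 4) = 0)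
    (hh : ∀ n, h n = ∫ x in (-z)..z, ((P n).eval x) ^ 2 * Real.exp (-x ^ 4))
    (hhpos : ∀ n, 0 < h n)
    (hP0 : P 0 = 1) (hP1 : P 1 = Polynomial.X)
    (hrec : ∀ n, Polynomial.X * P (n + 1) = P (n + 2) + Polynomial.C (γ (n + 1)) * P n)
    (hγ0 : γ 0 = 0)
    (hγ : ∀ n, γ (n + 1) = h (n + 1) / h n)
    (n : ℕ) (hn : 1 ≤ n) :
    (P n).eval z * (P (n - 1)).eval z * Real.exp (-z ^ 4) =
      ((n : ℝ) / 2 - 2 * γ n * (γ (n + 1) + γ n + γ (n - 1))) * h (n - 1) := by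
  obtain ⟨m, rfl⟩ := Nat.exists_eq_add_of_le' hn
  let L := expWeightFunctional (X ^ 4) (-z) z
  have hrec' : IsSymmetricRecurrence P γ := ⟨hP0, hP1, hγ0, hrec⟩
  have hP : IsMonicOrthogonal L P :=
    ⟨hmonic, hdeg, fun m n hmn ↦ by
      simpa [L, expWeightFunctional_apply] using horth m n hmn⟩
  have norm_eq : L (P m ^ 2) = h m := by simp [L, expWeightFunctional_apply, hh]
  have eval_neg : (X ^ 4 : ℝ[X]).eval (-z) = (X ^ 4 : ℝ[X]).eval z := by
    simp [Even.neg_pow (show Even 4 by decide)]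
  have endpoint := two_mul_eval_succ_mul_eval_mul_exp eval_neg hP hrec' m
  rw [hP.map_derivative_X_pow_four_mul hrec', norm_eq, eval_pow, eval_X] at endpoint
  push_cast [Nat.add_sub_cancel]
  linear_combination endpoint / 2
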